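/- Let p be a prime, k ≥ 2, s ≥ 1, and suppose there exists at least one tuple of units (y₁,…,y_s) modulo p^γ with y₁^k + ⋯ + y_s^k ≡ m (mod p^γ), where γ = γ(k,p). Then for every t ≥ γ and every lift m' of m modulo p^t with m' ≡ m (mod p^γ), one has M_s(p^t, m') > 0; in fact p^t · M_s(p^t, m') = p^{s(t-γ)} · p^γ · M_s(p^γ, m). -/

import Mathlib

/-- τ(k,p): the exact power of p dividing k. -/
def tau (k p : ℕ) : ℕ := k.factorization p

/-- γ(k,p) = τ+2 if p = 2 and τ > 0, and τ+1 otherwise. -/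
def gam (k p : ℕ) : ℕ := if p = 2 ∧ 0 < tau k p then tau k p + 2 else tau k p + 1

/-- M_s(h,m) = #{(y₁,…,y_s) ∈ ((ℤ/hℤ)^×)^s : y₁^k + ⋯ + y_s^k = m in ℤ/hℤ}. -/
noncomputable def M (k s h : ℕ) (m : ZMod h) : ℕ :=
  Nat.card {y : Fin s → (ZMod h)ˣ // (∑ i, ((y i : ZMod h)) ^ k) = m}

lemma lus_step (p k t : ℕ) (hp : p.Prime) (hk : 2 ≤ k) (ht : gam k p ≤ t) (z u : ℤ)
    (hu : ¬ (p : ℤ) ∣ u) (h : (p : ℤ) ^ t ∣ z ^ k - u) :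
    ∃ z' : ℤ, (p : ℤ) ^ (t + 1) ∣ z' ^ k - u := by
  have hpi : Prime (p : ℤ) := Nat.prime_iff_prime_int.mp hp
  obtain ⟨k', hk', hkk⟩ : ∃ k', ¬ p ∣ k' ∧ k = p ^ tau k p * k' :=
    ⟨k / p ^ tau k p, Nat.not_dvd_ordCompl hp (by omega), (Nat.ordProj_mul_ordCompl_eq_self k p).symm⟩
  obtain ⟨c, hc⟩ := h
  have hcop : IsCoprime (u * k') (p : ℤ) := by
    refine IsCoprime.symm ((Prime.coprime_iff_not_dvd hpi).2 ?_)
    intro hd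
    rcases hpi.dvd_or_dvd hd with h1 | h1
    · exact hu h1
    · exact hk' (by exact_mod_cast h1)
  obtain ⟨b, d, hbd⟩ := hcop
  have hgt : tau k p + 1 ≤ t := by unfold gam at ht; split_ifs at ht <;> omega
  obtain ⟨e, he⟩ : ∃ e, t = tau k p + e := ⟨t - tau k p, by omega⟩
  set a : ℤ := -c * b with ha
  have key : ∃ y : ℤ, (1 + (p : ℤ) ^ e * a) ^ (p ^ tau k p)
      = 1 + (p : ℤ) ^ tau k p * (p : ℤ) ^ e * (a + p * y) := by
    by_cases h0 : tau k p = 0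
    · exact ⟨0, by simp [h0]⟩
    · refine ZMod.exists_one_add_mul_pow_prime_pow_eq hp (dvd_pow_self _ (by omega)) ?_ a _
      rw [← pow_succ', ← pow_succ, ← pow_mul]
      apply pow_dvd_pow
      unfold gam at ht
      have := hp.two_le
      split_ifs at ht with h2
      · obtain ⟨rfl, -⟩ := h2
        omega
      · have : 3 ≤ p := by
          by_contra hlt
          exact h2 ⟨by omega, by omega⟩
        have h1 : 1 ≤ e := by omega
        nlinarith
  obtain ⟨y, hy⟩ := key
  obtain ⟨w, hw⟩ := Polynomial.powAddExpansion (1 : ℤ) ((p : ℤ) ^ t * (a + p * y)) k'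
  refine ⟨z * (1 + (p : ℤ) ^ e * a), ?_⟩
  have h1 : (1 + (p : ℤ) ^ e * a) ^ k
      = 1 + k' * ((p : ℤ) ^ t * (a + p * y)) + w * ((p : ℤ) ^ t * (a + p * y)) ^ 2 := by
    conv_lhs => rw [hkk]
    rw [pow_mul, hy, ← pow_add, ← he, hw]
    simp
  have hz : z ^ k = u + (p : ℤ) ^ t * c := by linarith
  rw [mul_pow, h1, hz]
  obtain ⟨q, hq⟩ : ∃ q : ℤ, (p : ℤ) ^ t = p * q := dvd_pow_self _ (by omega)
  rw [pow_succ]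
  have hbd' : b * (u * k') = 1 - d * p := by linarith
  refine ⟨c * d + u * k' * y + c * k' * q * (a + p * y)
    + (u + (p : ℤ) ^ t * c) * w * q * (a + p * y) ^ 2, ?_⟩
  have e1 : u * k' * a = -c * (1 - d * p) := by rw [← hbd', ha]; ring
  generalize (p : ℤ) ^ t = P at *
  subst hq
  linear_combination (p * q) * e1

lemma lus_exists_int (p k t : ℕ) (hp : p.Prime) (hk : 2 ≤ k) (ht : gam k p ≤ t) (u : ℤ)
    (h : (p : ℤ) ^ gam k p ∣ 1 - u) : ∃ z : ℤ, (p : ℤ) ^ t ∣ z ^ k - u := by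
  have hg : gam k p ≠ 0 := by unfold gam; split_ifs <;> omega
  have hu : ¬ (p : ℤ) ∣ u := by
    intro hd
    have h1 : (p : ℤ) ∣ 1 - u := (dvd_pow_self _ hg).trans h
    have h2 : (p : ℤ) ∣ 1 := by simpa using dvd_add h1 hd
    exact (Nat.prime_iff_prime_int.mp hp).not_dvd_one h2
  induction t, ht using Nat.le_induction with
  | base => exact ⟨1, by simpa using h⟩
  | succ n hn ih =>
    obtain ⟨z, hz⟩ := ih
    exact lus_step p k n hp hk hn z u hu hz

lemma lus_exists (p k t : ℕ) (hp : p.Prime) (hk : 2 ≤ k) (ht : gam k p ≤ t) (w : ZMod (p ^ t))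
    (hw : ZMod.castHom (pow_dvd_pow p ht) (ZMod (p ^ gam k p)) w = 1) :
    ∃ z : (ZMod (p ^ t))ˣ, (z : ZMod (p ^ t)) ^ k = w := by
  have hg : gam k p ≠ 0 := by unfold gam; split_ifs <;> omega
  obtain ⟨u, rfl⟩ := ZMod.intCast_surjective w
  have h : (p : ℤ) ^ gam k p ∣ 1 - u := by
    rw [map_intCast] at hw
    have h2 : ((u : ℤ) : ZMod (p ^ gam k p)) = ((1 : ℤ) : ZMod (p ^ gam k p)) := by simpa using hw
    have := (ZMod.intCast_eq_intCast_iff_dvd_sub _ _ _).1 h2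
    exact_mod_cast this
  obtain ⟨z, hz⟩ := lus_exists_int p k t hp hk ht u h
  have hzu : ((z : ℤ) : ZMod (p ^ t)) ^ k = u := by
    rw [← Int.cast_pow, eq_comm, ZMod.intCast_eq_intCast_iff_dvd_sub]
    exact_mod_cast hz
  have hpz : ¬ (p : ℤ) ∣ z := by
    intro hd
    have h1 : (p : ℤ) ∣ 1 - u := (dvd_pow_self _ hg).trans h
    have h2 : (p : ℤ) ∣ z ^ k - u := (dvd_pow_self _ (by omega)).trans hz
    have h3 : (p : ℤ) ∣ z ^ k := dvd_pow hd (by omega)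
    have h4 : (p : ℤ) ∣ 1 := by
      have := dvd_add (dvd_sub h1 h2) h3
      simpa using this
    exact (Nat.prime_iff_prime_int.mp hp).not_dvd_one h4
  have hc : IsCoprime z ((p ^ t : ℕ) : ℤ) := by
    push_cast
    exact (((Nat.prime_iff_prime_int.mp hp).coprime_iff_not_dvd).2 hpz).symm.pow_right
  exact ⟨ZMod.unitOfIsCoprime z hc, by simpa using hzu⟩

lemma lus_ker_card {G H : Type*} [CommGroup G] [CommGroup H] [Finite G] [Finite H] (k : ℕ)
    (f : G →* H) (hf : Function.Surjective f) (hK : ∀ x, f x = 1 → ∃ z, z ^ k = x) :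
    Nat.card (powMonoidHom k : G →* G).ker = Nat.card (powMonoidHom k : H →* H).ker := by
  rw [← Subgroup.index_range, ← Subgroup.index_range, ← Subgroup.index_comap_of_surjective _ hf]
  congr 1
  ext x
  simp only [MonoidHom.mem_range, Subgroup.mem_comap, powMonoidHom_apply]
  constructor
  · rintro ⟨y, rfl⟩
    exact ⟨f y, by simp⟩
  · rintro ⟨y, hy⟩
    obtain ⟨y, rfl⟩ := hf y
    obtain ⟨z, hz⟩ := hK (x * (y ^ k)⁻¹) (by simp [hy])
    exact ⟨z * y, by rw [mul_pow, hz]; simp⟩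

/-- number of unit k-th roots. -/
noncomputable def lusN (k n : ℕ) (x : ZMod n) : ℕ :=
  Nat.card {y : (ZMod n)ˣ // (y : ZMod n) ^ k = x}

lemma lusN_pow (k n : ℕ) (z : (ZMod n)ˣ) :
    lusN k n ((z : ZMod n) ^ k) = Nat.card (powMonoidHom k : (ZMod n)ˣ →* (ZMod n)ˣ).ker := by
  rw [← Nat.card_congr ((powMonoidHom k : (ZMod n)ˣ →* (ZMod n)ˣ).fiberEquivKer z)]
  refine Nat.card_congr (Equiv.subtypeEquivRight fun y => ?_)
  simp [← Units.val_inj]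

lemma lusN_eq (p k t : ℕ) (hp : p.Prime) (hk : 2 ≤ k) (ht : gam k p ≤ t) (x : ZMod (p ^ t)) :
    lusN k (p ^ t) x
      = lusN k (p ^ gam k p) (ZMod.castHom (pow_dvd_pow p ht) (ZMod (p ^ gam k p)) x) := by
  have : NeZero p := ⟨hp.ne_zero⟩
  set φ := ZMod.castHom (pow_dvd_pow p ht) (ZMod (p ^ gam k p)) with hφ
  have hsurj := ZMod.unitsMap_surjective (pow_dvd_pow p ht)
  have hval : ∀ y : (ZMod (p ^ t))ˣ,
      ((ZMod.unitsMap (pow_dvd_pow p ht) y : (ZMod (p ^ gam k p))ˣ) : ZMod (p ^ gam k p)) = φ y :=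
    fun y => rfl
  by_cases h : ∃ y : (ZMod (p ^ gam k p))ˣ, (y : ZMod (p ^ gam k p)) ^ k = φ x
  · obtain ⟨y, hy⟩ := h
    obtain ⟨y, rfl⟩ := hsurj y
    have hw : φ (x * ((y⁻¹ ^ k : (ZMod (p ^ t))ˣ) : ZMod (p ^ t))) = 1 := by
      rw [map_mul, ← hy, hval, ← map_pow, ← map_mul, ← Units.val_pow_eq_pow_val, ← Units.val_mul]
      simp
    obtain ⟨z, hz⟩ := lus_exists p k t hp hk ht _ hw
    have hx : x = ((z * y : (ZMod (p ^ t))ˣ) : ZMod (p ^ t)) ^ k := by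
      rw [Units.val_mul, mul_pow, hz, mul_assoc, ← Units.val_pow_eq_pow_val, ← Units.val_mul]
      simp
    rw [← hy, lusN_pow, hx, lusN_pow]
    refine lus_ker_card k (ZMod.unitsMap (pow_dvd_pow p ht)) hsurj ?_
    intro w hw
    obtain ⟨z, hz⟩ := lus_exists p k t hp hk ht w (by
      have := congrArg Units.val hw
      rw [hval] at this
      exact this)
    exact ⟨z, Units.ext (by simpa using hz)⟩
  · have h1 : IsEmpty {y : (ZMod (p ^ gam k p))ˣ // (y : ZMod (p ^ gam k p)) ^ k = φ x} :=
      ⟨fun y => h ⟨y.1, y.2⟩⟩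
    have h2 : IsEmpty {y : (ZMod (p ^ t))ˣ // (y : ZMod (p ^ t)) ^ k = x} :=
      ⟨fun y => h ⟨ZMod.unitsMap (pow_dvd_pow p ht) y.1, by rw [hval, ← map_pow, y.2]⟩⟩
    simp only [lusN, Nat.card_of_isEmpty]

lemma lus_sum {A B : Type*} [Group A] [Group B] [Fintype A] [Fintype B]
    (f : A →* B) (hf : Function.Surjective f) (F : B → ℕ) :
    Fintype.card B * ∑ a, F (f a) = Fintype.card A * ∑ b, F b := by
  classical
  have h1 : ∀ G : B → ℕ, ∑ a, G (f a) = Nat.card f.ker * ∑ b, G b := by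
    intro G
    rw [← Finset.sum_fiberwise Finset.univ f, Finset.mul_sum]
    refine Finset.sum_congr rfl fun b _ => ?_
    rw [Finset.sum_congr rfl (g := fun _ => G b) (by
      intro a ha
      rw [(Finset.mem_filter.1 ha).2]), Finset.sum_const, smul_eq_mul]
    congr 1
    rw [← Nat.card_congr (MonoidHom.fiberEquivKerOfSurjective hf b), ← Fintype.card_subtype,
      ← Nat.card_eq_fintype_card]
    rfl
  have h2 : Fintype.card A = Nat.card f.ker * Fintype.card B := by
    simpa using h1 (fun _ => 1)
  rw [h1, h2]
  ring

lemma lus_M_succ (k r n : ℕ) [NeZero n] (m : ZMod n) :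
    M k (r + 1) n m
      = ∑ y : Fin r → (ZMod n)ˣ, lusN k n (m - ∑ i, (y i : ZMod n) ^ k) := by
  unfold M lusN
  rw [← Nat.card_sigma]
  refine Nat.card_congr
    { toFun := fun y => ⟨fun i => y.1 i.succ, y.1 0, ?_⟩
      invFun := fun y => ⟨Fin.cons y.2.1 y.1, ?_⟩
      left_inv := ?_
      right_inv := ?_ }
  · have := y.2
    rw [Fin.sum_univ_succ] at this
    exact eq_sub_of_add_eq this
  · rw [Fin.sum_univ_succ]
    simp [y.2.2]
  · rintro ⟨y, hy⟩
    apply Subtype.ext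
    exact Fin.cons_self_tail y
  · rintro ⟨y, z, hz⟩
    rfl

theorem lift_unit_solutions (p k s : ℕ) (hp : p.Prime) (hk : 2 ≤ k) (hs : 1 ≤ s)
    (m : ZMod (p ^ gam k p))
    (hex : ∃ y : Fin s → (ZMod (p ^ gam k p))ˣ,
      (∑ i, ((y i : ZMod (p ^ gam k p))) ^ k) = m)
    (t : ℕ) (ht : gam k p ≤ t) (m' : ZMod (p ^ t))
    (hm' : ZMod.castHom (pow_dvd_pow p ht) (ZMod (p ^ gam k p)) m' = m) :
    0 < M k s (p ^ t) m' ∧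
      p ^ t * M k s (p ^ t) m'
        = p ^ (s * (t - gam k p)) * p ^ gam k p * M k s (p ^ gam k p) m := by
  have : NeZero p := ⟨hp.ne_zero⟩
  obtain ⟨r, rfl⟩ : ∃ r, s = r + 1 := ⟨s - 1, by omega⟩
  have hpos : 0 < M k (r + 1) (p ^ gam k p) m := by
    obtain ⟨y, hy⟩ := hex
    have : Nonempty {y : Fin (r + 1) → (ZMod (p ^ gam k p))ˣ //
      (∑ i, ((y i : ZMod (p ^ gam k p))) ^ k) = m} := ⟨⟨y, hy⟩⟩
    exact Nat.card_pos
  have hg : gam k p ≠ 0 := by unfold gam; split_ifs <;> omega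
  have hcard : Fintype.card (ZMod (p ^ t))ˣ
      = p ^ (t - gam k p) * Fintype.card (ZMod (p ^ gam k p))ˣ := by
    rw [ZMod.card_units_eq_totient, ZMod.card_units_eq_totient,
      Nat.totient_prime_pow hp (by omega), Nat.totient_prime_pow hp (by omega), ← mul_assoc,
      ← pow_add]
    congr 2
    omega
  have hsurj := ZMod.unitsMap_surjective (pow_dvd_pow p ht)
  have h1 := lus_sum (A := Fin r → (ZMod (p ^ t))ˣ) (B := Fin r → (ZMod (p ^ gam k p))ˣ)
    ((ZMod.unitsMap (pow_dvd_pow p ht)).compLeft (Fin r)) (hsurj.comp_left)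
    (fun y => lusN k (p ^ gam k p) (m - ∑ i, (y i : ZMod (p ^ gam k p)) ^ k))
  rw [← lus_M_succ] at h1
  have h2 : M k (r + 1) (p ^ t) m' = ∑ a : Fin r → (ZMod (p ^ t))ˣ,
      lusN k (p ^ gam k p) (m - ∑ i,
        ((((ZMod.unitsMap (pow_dvd_pow p ht)).compLeft (Fin r)) a i : (ZMod (p ^ gam k p))ˣ) :
          ZMod (p ^ gam k p)) ^ k) := by
    rw [lus_M_succ]
    refine Finset.sum_congr rfl fun a _ => ?_
    rw [lusN_eq p k t hp hk ht, map_sub, hm', map_sum]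
    congr 2
    refine Finset.sum_congr rfl fun i _ => ?_
    rw [map_pow]
    rfl
  rw [← h2] at h1
  simp only [Fintype.card_pi, Finset.prod_const, Finset.card_univ, Fintype.card_fin, hcard,
    mul_pow] at h1
  have hc : 0 < Fintype.card (ZMod (p ^ gam k p))ˣ ^ r := pow_pos Fintype.card_pos _
  have h3 : M k (r + 1) (p ^ t) m'
      = (p ^ (t - gam k p)) ^ r * M k (r + 1) (p ^ gam k p) m := by
    apply Nat.eq_of_mul_eq_mul_left hc
    rw [h1]; ring
  refine ⟨?_, ?_⟩
  · rw [h3]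
    exact Nat.mul_pos (pow_pos (pow_pos hp.pos _) _) hpos
  · obtain ⟨d, rfl⟩ := Nat.exists_eq_add_of_le ht
    rw [h3, Nat.add_sub_cancel_left]
    ring
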